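/- (Formal duality is inherited by symmetric powers.) Let d ≥ 0, n ≥ 1, v ∈ ℂ with v ≠ 0, and let P and P' be invertible (d+1)×(d+1) complex matrices with P' = v·P^{-1}. For a (d+1)×(d+1) matrix M, let M̂ be the matrix with rows and columns indexed by vectors α of d+1 nonnegative integers summing to n, whose (β,α)-entry is the coefficient of s^α in (Ms)^β = Π_{j=0}^{d} (Σ_{i=0}^{d} M_{j,i}·s_i)^{β(j)}. Then P̂' = v^n·(P̂)^{-1}; hence if association schemes A and B on v vertices are formally dual (the matrix of eigenvalues of B equals v times the inverse of that of A), then H(n,A) and H(n,B) are formally dual, and if A is formally self-dual then so is H(n,A). -/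

import Mathlib

open Matrix Finset MvPolynomial

/-- `M̂`: the matrix of the induced action of `M` on homogeneous polynomials of degree `n`
in `s_0, …, s_d`; its `(β,α)`-entry is the coefficient of `s^α` in `(Ms)^β`. -/
noncomputable def hatMat (d n : ℕ) (M : Matrix (Fin (d + 1)) (Fin (d + 1)) ℂ) :
    Matrix {α : Fin (d + 1) → ℕ // α ∈ Finset.Nat.antidiagonalTuple (d + 1) n}
      {α : Fin (d + 1) → ℕ // α ∈ Finset.Nat.antidiagonalTuple (d + 1) n} ℂ :=
  Matrix.of fun β α =>
    MvPolynomial.coeff (Finsupp.equivFunOnFinite.symm α.1)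
      (∏ j : Fin (d + 1),
        (∑ i : Fin (d + 1), MvPolynomial.C (M j i) * MvPolynomial.X i) ^ β.1 j)

/-! Writing `s ↦ Ms` for the linear substitution attached to `M`, the matrix `M̂` describes the
algebra map `p(s) ↦ p(Ms)` on degree `n` forms. Substituting first `s ↦ Ms` and then `s ↦ Ns` is
substituting `s ↦ MNs`, so `M ↦ M̂` is multiplicative and preserves inverses, while scaling `M`
by `v` scales the image of every degree `n` form by `vⁿ`. -/

section LinearSubstitution

variable {R ι κ μ : Type*} [CommSemiring R]

theorem bind₁_smul_monomial (v : R) (f : ι → MvPolynomial κ R) (β : ι →₀ ℕ) (r : R) :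
    bind₁ (v • f) (monomial β r) = v ^ β.degree • bind₁ f (monomial β r) := by
  simp_rw [bind₁_monomial, Pi.smul_apply, smul_pow, prod_smul, prod_pow_eq_pow_sum,
    mul_smul_comm, Finsupp.degree_apply]

variable [Fintype κ] [Fintype μ]

theorem bind₁_toMvPolynomial_mul (M : Matrix ι κ R) (N : Matrix κ μ R) (p : MvPolynomial ι R) :
    bind₁ (M * N).toMvPolynomial p = bind₁ N.toMvPolynomial (bind₁ M.toMvPolynomial p) := by
  rw [bind₁_bind₁, funext (toMvPolynomial_mul M N)]

theorem isHomogeneous_bind₁_toMvPolynomial (M : Matrix ι κ R) {n : ℕ} {p : MvPolynomial ι R}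
    (hp : p.IsHomogeneous n) : (bind₁ M.toMvPolynomial p).IsHomogeneous n := by
  simpa using hp.aeval M.toMvPolynomial M.toMvPolynomial_isHomogeneous

theorem toMvPolynomial_smul (v : R) (M : Matrix ι κ R) :
    (v • M).toMvPolynomial = v • M.toMvPolynomial := by
  ext1 i
  simp [toMvPolynomial, smul_sum, smul_monomial]

end LinearSubstitution

/-- The exponent vectors `α : σ →₀ ℕ` with entries summing to `n`, which index the monomials of
degree `n`. They are finitely supported functions, as in `MvPolynomial`; `hatMat` uses plain
functions instead. -/
abbrev DegreeExponent (σ : Type*) [Fintype σ] [DecidableEq σ] (n : ℕ) : Type _ :=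
  {α : σ →₀ ℕ // α ∈ finsuppAntidiag univ n}

section SymmetricPower

variable {R σ τ υ : Type*} [CommSemiring R]
  [Fintype σ] [DecidableEq σ] [Fintype τ] [DecidableEq τ] [Fintype υ] [DecidableEq υ] {n : ℕ}

theorem mem_finsuppAntidiag_univ_iff_degree_eq {α : σ →₀ ℕ} :
    α ∈ finsuppAntidiag univ n ↔ α.degree = n := by
  simp [Finsupp.degree_eq_sum]

theorem sum_monomial_coeff_of_isHomogeneous {p : MvPolynomial σ R} (hp : p.IsHomogeneous n) :
    ∑ γ : DegreeExponent σ n, monomial γ.1 (coeff γ.1 p) = p := by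
  have support_subset : p.support ⊆ finsuppAntidiag univ n := fun γ hγ =>
    mem_finsuppAntidiag_univ_iff_degree_eq.2 (hp.degree_eq_sum_deg_support hγ).symm
  rw [Finset.sum_coe_sort (finsuppAntidiag univ n) fun γ => monomial γ (coeff γ p)]
  conv_rhs => rw [p.as_sum]
  exact (sum_subset support_subset fun γ _ hγ => by
    rw [notMem_support_iff.1 hγ, map_zero]).symm

theorem coeff_bind₁_of_isHomogeneous {ι : Type*} {p : MvPolynomial σ R} (hp : p.IsHomogeneous n)
    (f : σ → MvPolynomial ι R) (α : ι →₀ ℕ) :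
    coeff α (bind₁ f p) =
      ∑ γ : DegreeExponent σ n, coeff γ.1 p * coeff α (bind₁ f (monomial γ.1 1)) := by
  conv_lhs => rw [← sum_monomial_coeff_of_isHomogeneous hp]
  simp_rw [map_sum, coeff_sum, bind₁_monomial, map_one, one_mul, coeff_C_mul]

/-- The `n`-th symmetric power of a rectangular matrix `M` over a commutative semiring: the matrix,
in the monomial bases, of the substitution `p(s) ↦ p(Ms)` on degree `n` forms. The coefficients of
the image of `s^β` form the row `β`, so that the symmetric power of a product is the product of the
symmetric powers in the same order. -/
noncomputable def symmPowerMatrix (n : ℕ) (M : Matrix σ τ R) :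
    Matrix (DegreeExponent σ n) (DegreeExponent τ n) R :=
  Matrix.of fun β α => coeff α.1 (bind₁ M.toMvPolynomial (monomial β.1 1))

theorem symmPowerMatrix_apply (M : Matrix σ τ R) (β : DegreeExponent σ n)
    (α : DegreeExponent τ n) :
    symmPowerMatrix n M β α = coeff α.1 (bind₁ M.toMvPolynomial (monomial β.1 1)) :=
  rfl

theorem symmPowerMatrix_mul (M : Matrix σ τ R) (N : Matrix τ υ R) :
    symmPowerMatrix n (M * N) = symmPowerMatrix n M * symmPowerMatrix n N := by
  ext β α
  have hβ : (bind₁ M.toMvPolynomial (monomial β.1 1)).IsHomogeneous n :=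
    isHomogeneous_bind₁_toMvPolynomial M <|
      isHomogeneous_monomial 1 (mem_finsuppAntidiag_univ_iff_degree_eq.1 β.2)
  simp only [mul_apply, symmPowerMatrix_apply, bind₁_toMvPolynomial_mul,
    coeff_bind₁_of_isHomogeneous hβ]

theorem symmPowerMatrix_one : symmPowerMatrix n (1 : Matrix σ σ R) = 1 := by
  ext β α
  rw [symmPowerMatrix_apply, toMvPolynomial_one, bind₁_X_left, AlgHom.id_apply,
    coeff_monomial, one_apply]
  exact if_congr Subtype.ext_iff.symm rfl rfl

theorem symmPowerMatrix_smul (v : R) (M : Matrix σ τ R) :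
    symmPowerMatrix n (v • M) = v ^ n • symmPowerMatrix n M := by
  ext β α
  rw [Matrix.smul_apply, symmPowerMatrix_apply, symmPowerMatrix_apply, toMvPolynomial_smul,
    bind₁_smul_monomial, mem_finsuppAntidiag_univ_iff_degree_eq.1 β.2, coeff_smul]

end SymmetricPower

section Inverse

variable {R σ : Type*} [CommRing R] [Fintype σ] [DecidableEq σ] {n : ℕ}

theorem symmPowerMatrix_inv {P : Matrix σ σ R} (hP : IsUnit P.det) :
    symmPowerMatrix n P⁻¹ = (symmPowerMatrix n P)⁻¹ := by
  refine (inv_eq_right_inv ?_).symm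
  rw [← symmPowerMatrix_mul, mul_nonsing_inv P hP, symmPowerMatrix_one]

theorem formal_duality_hat_general (n : ℕ) (v : R) (P P' : Matrix σ σ R)
    (hP : IsUnit P.det) (hP' : P' = v • P⁻¹) :
    symmPowerMatrix n P' = v ^ n • (symmPowerMatrix n P)⁻¹ := by
  rw [hP', symmPowerMatrix_smul, symmPowerMatrix_inv hP]

end Inverse

/-- The exponent vectors indexing `hatMat`, viewed as finitely supported functions. -/
noncomputable def antidiagonalTupleEquivDegreeExponent (m n : ℕ) :
    {α : Fin m → ℕ // α ∈ Finset.Nat.antidiagonalTuple m n} ≃ DegreeExponent (Fin m) n :=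
  Finsupp.equivFunOnFinite.symm.subtypeEquiv fun α => by
    simp [Finset.Nat.mem_antidiagonalTuple]

theorem hatMat_eq_submatrix_symmPowerMatrix (d n : ℕ) (M : Matrix (Fin (d + 1)) (Fin (d + 1)) ℂ) :
    hatMat d n M = (symmPowerMatrix n M).submatrix
      (antidiagonalTupleEquivDegreeExponent (d + 1) n)
      (antidiagonalTupleEquivDegreeExponent (d + 1) n) := by
  ext β α
  simp [hatMat, symmPowerMatrix_apply, antidiagonalTupleEquivDegreeExponent, monomial_eq,
    Finsupp.prod_fintype, toMvPolynomial, C_mul_X_eq_monomial]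

/-- formal duality is inherited by symmetric powers:
if `P' = v P⁻¹` with `P` invertible and `v ≠ 0`, then `P̂' = vⁿ (P̂)⁻¹`; hence formally
dual schemes have formally dual generalized Hamming schemes, and a formally self-dual
scheme has formally self-dual `H(n,A)`. -/
theorem formal_duality_hat (d n : ℕ) (hn : 1 ≤ n) (v : ℂ) (hv : v ≠ 0)
    (P P' : Matrix (Fin (d + 1)) (Fin (d + 1)) ℂ)
    (hP : IsUnit P.det) (hP' : P' = v • P⁻¹) :
    hatMat d n P' = v ^ n • (hatMat d n P)⁻¹ := by
  simp only [hatMat_eq_submatrix_symmPowerMatrix, inv_submatrix_equiv,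
    formal_duality_hat_general n v P P' hP hP', submatrix_smul, Pi.smul_apply]
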